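/- arXiv:2112.01106 — 2 statements merged into one kernel-verified Lean document; each statement's English description precedes it below -/
import Mathlib

section
/- Let b > 1 and n > 1 be integers and a a positive integer with gcd(r_b(n), a) = 1. The set of maximal elements of Ap(S_a(b,n), a_1) with respect to the partial order ≼ defined by y ≼ x iff x − y ∈ S_a(b,n) is exactly { a_i + (b−1)·∑_{j=i}^n a_j : i = 2, …, n }. -/
/-- The repunit number in base `b` of length `ℓ`: `r_b(ℓ) = ∑_{j=0}^{ℓ-1} b^j`. -/
def repunit (b ℓ : ℕ) : ℕ := ∑ j ∈ Finset.range ℓ, b ^ j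

/-- The sequence `a_i = r_b(n) + a·r_b(i-1)`. -/
def aseq (b a n i : ℕ) : ℕ := repunit b n + a * repunit b (i - 1)

/-- The additive submonoid `S_a(b,n)` of `ℕ` generated by `{a_i : i ≥ 1}`. -/
def grep (b a n : ℕ) : AddSubmonoid ℕ :=
  AddSubmonoid.closure {x | ∃ i, 1 ≤ i ∧ x = aseq b a n i}

/-- The Apéry set of `S` with respect to `s`: elements `ω ∈ S` with `ω - s ∉ S`
(i.e. there is no `t ∈ S` with `ω = t + s`). -/
def Apery (S : AddSubmonoid ℕ) (s : ℕ) : Set ℕ :=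
  {ω | ω ∈ S ∧ ¬ ∃ t ∈ S, ω = t + s}

theorem repunit_geom (B l : ℕ) : B * repunit (B+1) l + 1 = (B+1)^l := by
  induction l with
  | zero => simp [repunit]
  | succ k ih =>
    have : repunit (B+1) (k+1) = repunit (B+1) k + (B+1)^k := by
      simp [repunit, Finset.sum_range_succ]
    rw [this, pow_succ, ← ih]; ring

def dsum (B N : ℕ) : ℕ := (Nat.digits (B+1) N).sum

theorem dsum_zero (B : ℕ) : dsum B 0 = 0 := by simp [dsum]

theorem dsum_rec (B : ℕ) (hB : 0 < B) (q r : ℕ) (hr : r ≤ B) :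
    dsum B ((B+1) * q + r) = r + dsum B q := by
  rcases Nat.eq_zero_or_pos q with rfl | hq
  · rcases Nat.eq_zero_or_pos r with rfl | hr0
    · simp [dsum]
    · simp [dsum, Nat.digits_of_lt (B+1) r (by omega) (by omega)]
  · unfold dsum
    rw [add_comm ((B+1)*q) r, Nat.digits_add (B+1) (by omega) r q (by omega) (Or.inr (by omega))]
    simp

theorem dsum_mul (B : ℕ) (hB : 0 < B) (q : ℕ) : dsum B ((B+1) * q) = dsum B q := by
  simpa using dsum_rec B hB q 0 (by omega)

theorem dsum_pow (B : ℕ) (hB : 0 < B) (e : ℕ) : dsum B ((B+1)^e) = 1 := by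
  induction e with
  | zero => simpa [dsum_zero] using dsum_rec B hB 0 1 (by omega)
  | succ k ih => rw [pow_succ, mul_comm, dsum_mul B hB, ih]

theorem exists_dm (B N : ℕ) : ∃ q r, r ≤ B ∧ N = (B+1) * q + r :=
  ⟨N / (B+1), N % (B+1), Nat.lt_succ_iff.mp (Nat.mod_lt _ (by omega)), (Nat.div_add_mod _ _).symm⟩

theorem dsum_succ_le (B : ℕ) (hB : 0 < B) (N : ℕ) : dsum B (N+1) ≤ dsum B N + 1 := by
  induction N using Nat.strong_induction_on with
  | _ N ih =>
    obtain ⟨q, r, hr, rfl⟩ := exists_dm B N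
    rw [dsum_rec B hB q r hr]
    rcases Nat.lt_or_ge r B with h | h
    · rw [add_assoc, dsum_rec B hB q (r+1) (by omega)]; omega
    · have : (B+1) * q + r + 1 = (B+1) * (q+1) := by
        have : r = B := by omega
        subst this; ring
      rw [this, dsum_mul B hB]
      have := ih q (by nlinarith)
      omega

theorem dsum_add_le (B : ℕ) (hB : 0 < B) (M N : ℕ) : dsum B (M+N) ≤ dsum B M + dsum B N := by
  induction N using Nat.strong_induction_on generalizing M with
  | _ N ih =>
    rcases Nat.eq_zero_or_pos N with rfl | hN
    · simp
    obtain ⟨q, r, hr, rfl⟩ := exists_dm B N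
    obtain ⟨p, s, hs, rfl⟩ := exists_dm B M
    rw [dsum_rec B hB q r hr, dsum_rec B hB p s hs]
    have h1 := ih q (by nlinarith) p
    rcases Nat.lt_or_ge B (r+s) with h | h
    · obtain ⟨u, hu⟩ : ∃ u, r + s = B + 1 + u := ⟨r+s-(B+1), by omega⟩
      have : (B+1) * p + s + ((B+1) * q + r) = (B+1) * (p+q+1) + u := by
        linear_combination hu
      rw [this, dsum_rec B hB _ u (by omega)]
      have := dsum_succ_le B hB (p+q)
      omega
    · have : (B+1) * p + s + ((B+1) * q + r) = (B+1) * (p+q) + (r+s) := by ring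
      rw [this, dsum_rec B hB _ _ h]
      omega

theorem dsum_cong (B : ℕ) (hB : 0 < B) (N : ℕ) : ∃ j, N = dsum B N + B * j := by
  induction N using Nat.strong_induction_on with
  | _ N ih =>
    rcases Nat.eq_zero_or_pos N with rfl | hN
    · exact ⟨0, by simp [dsum_zero]⟩
    obtain ⟨q, r, hr, rfl⟩ := exists_dm B N
    rw [dsum_rec B hB q r hr]
    obtain ⟨j, hj⟩ := ih q (by nlinarith)
    exact ⟨q + j, by nlinarith⟩

theorem dsum_compl (B : ℕ) (hB : 0 < B) (n x y : ℕ) (h : x + y + 1 = (B+1)^n) :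
    dsum B x + dsum B y = n * B := by
  induction n generalizing x y with
  | zero =>
    have : x = 0 ∧ y = 0 := by simp at h; omega
    simp [this.1, this.2, dsum_zero]
  | succ n ih =>
    obtain ⟨q, r, hr, rfl⟩ := exists_dm B x
    obtain ⟨p, s, hs, rfl⟩ := exists_dm B y
    have key : (B+1) * (q + p) + (r + s + 1) = (B+1) * (B+1)^n := by
      rw [pow_succ] at h; linear_combination h
    have hd : (B+1) ∣ (r + s + 1) := (Nat.dvd_add_right (Dvd.intro _ rfl)).mp (Dvd.intro _ key.symm)
    obtain ⟨c, hc⟩ := hd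
    have hc1 : c = 1 := by
      rcases c with _ | _ | c
      · omega
      · rfl
      · nlinarith
    subst hc1
    have : q + p + 1 = (B+1)^n := by
      apply Nat.eq_of_mul_eq_mul_left (Nat.succ_pos B)
      rw [← key, hc]; simp only [Nat.succ_eq_add_one]; ring
    rw [dsum_rec B hB q r hr, dsum_rec B hB p s hs]
    have := ih q p this
    have e : (n+1)*B = n*B + B := by ring
    omega

theorem dsum_split (B : ℕ) (hB : 0 < B) (n q r : ℕ) (h : r < (B+1)^n) :
    dsum B ((B+1)^n * q + r) = dsum B q + dsum B r := by
  induction n generalizing r with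
  | zero =>
    have : r = 0 := by simp at h; omega
    simp [this, dsum_zero]
  | succ n ih =>
    obtain ⟨p, s, hs, rfl⟩ := exists_dm B r
    have hp : p < (B+1)^n := by
      by_contra hh
      rw [pow_succ] at h
      have := Nat.mul_le_mul_left (B+1) (Nat.le_of_not_lt hh)
      nlinarith
    have : (B+1)^(n+1) * q + ((B+1) * p + s) = (B+1) * ((B+1)^n * q + p) + s := by ring
    rw [this, dsum_rec B hB _ _ hs, dsum_rec B hB _ _ hs, ih p hp]; omega

theorem dsum_fold (B : ℕ) (hB : 0 < B) (n N0 : ℕ) (h0 : 0 < N0) (hn : 0 < n) (h1 : N0 < (B+1)^n)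
    (C : ℕ) (hC : (B+1)^n = C + 1) (N : ℕ) :
    ∀ t, N = N0 + t * C → dsum B N0 ≤ dsum B N := by
  induction N using Nat.strong_induction_on with
  | _ N ih =>
    intro t ht
    rcases Nat.eq_zero_or_pos t with rfl | htp
    · simp at ht; rw [ht]
    have hC0 : 0 < C := by omega
    have hge : (B+1)^n ≤ N := by nlinarith
    set q := N / (B+1)^n with hq
    set r := N % (B+1)^n with hr
    have hN : N = (B+1)^n * q + r := (Nat.div_add_mod _ _).symm
    have hrl : r < (B+1)^n := Nat.mod_lt _ (by positivity)
    have hq0 : 0 < q := Nat.div_pos hge (by positivity)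
    have hs : dsum B N = dsum B q + dsum B r := by
      conv_lhs => rw [hN]
      exact dsum_split B hB n q r hrl
    have hN2 : N = q * C + q + r := by rw [hC] at hN; linarith
    have hqt : q ≤ t := by
      by_contra hh
      have : (t+1) * C ≤ q * C := Nat.mul_le_mul_right C (by omega)
      nlinarith
    obtain ⟨u, rfl⟩ := Nat.exists_eq_add_of_le hqt
    have := ih (q + r) (by nlinarith) u (by nlinarith)
    have := dsum_add_le B hB q r
    omega

inductive PowSum (B : ℕ) : ℕ → ℕ → Prop
  | zero : PowSum B 0 0
  | add (k N e : ℕ) : PowSum B k N → PowSum B (k+1) (N + (B+1)^e)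

theorem PowSum.addMany {B k N : ℕ} (h : PowSum B k N) (e j : ℕ) :
    PowSum B (k + j) (N + j * (B+1)^e) := by
  induction j with
  | zero => simpa using h
  | succ j ih =>
    have := PowSum.add _ _ e ih
    rw [add_assoc N, ← Nat.succ_mul] at this
    exact this

theorem PowSum.mulBase {B k N : ℕ} (h : PowSum B k N) : PowSum B k ((B+1) * N) := by
  induction h with
  | zero => exact PowSum.zero
  | add k N e _ ih =>
    have := PowSum.add _ _ (e+1) ih
    convert this using 1
    ring

theorem PowSum.of_dsum (B : ℕ) (hB : 0 < B) (N : ℕ) : PowSum B (dsum B N) N := by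
  induction N using Nat.strong_induction_on with
  | _ N ih =>
    rcases Nat.eq_zero_or_pos N with rfl | hN
    · rw [dsum_zero]; exact PowSum.zero
    obtain ⟨q, r, hr, rfl⟩ := exists_dm B N
    rw [dsum_rec B hB q r hr]
    have := ((ih q (by nlinarith)).mulBase).addMany 0 r
    convert this using 1
    · ring
    · ring

theorem PowSum.split {B k N : ℕ} (h : PowSum B k N) (hk : k < N) : PowSum B (k + B) N := by
  induction h with
  | zero => omega
  | add k N e h ih =>
    rcases e with _ | e
    · have := PowSum.add _ _ 0 (ih (by simpa using hk))
      convert this using 1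
      ring
    · have := h.addMany e (B+1)
      convert this using 1
      · ring
      · ring

theorem PowSum.splitMany {B k N : ℕ} (hB : 0 < B) (h : PowSum B k N) (j : ℕ) (hk : k + B * j ≤ N) :
    PowSum B (k + B * j) N := by
  induction j with
  | zero => simpa using h
  | succ j ih =>
    have e : B * (j+1) = B * j + B := by ring
    have := (ih (by omega)).split (by omega)
    rw [e, ← add_assoc]; exact this

def TT (B k m : ℕ) : Prop := dsum B (B * m + k) ≤ k

theorem TT_add {B : ℕ} (hB : 0 < B) {k m k' m' : ℕ} (h : TT B k m) (h' : TT B k' m') :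
    TT B (k+k') (m+m') := by
  unfold TT at *
  have := dsum_add_le B hB (B*m+k) (B*m'+k')
  have e : B * (m+m') + (k+k') = (B*m+k) + (B*m'+k') := by ring
  rw [e]; omega

theorem TT_mono {B : ℕ} (hB : 0 < B) {k m k' : ℕ} (h : TT B k m) (hk : k ≤ k') : TT B k' m := by
  induction hk with
  | refl => exact h
  | @step j _ ih =>
    have h1 : TT B 1 0 := by
      unfold TT; simpa using (dsum_pow B hB 0).le
    simpa using TT_add hB ih h1

theorem TT_rep {B : ℕ} (hB : 0 < B) (e : ℕ) : TT B 1 (repunit (B+1) e) := by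
  unfold TT; rw [repunit_geom, dsum_pow B hB]

theorem TT_self {B : ℕ} (hB : 0 < B) (m : ℕ) : TT B m m := by
  unfold TT
  rw [show B * m + m = (B+1) * m by ring, dsum_mul B hB]
  obtain ⟨j, hj⟩ := dsum_cong B hB m
  omega

theorem mem_iff {B : ℕ} (hB : 0 < B) (a n x : ℕ) :
    x ∈ grep (B+1) a n ↔ ∃ k m, TT B k m ∧ x = k * repunit (B+1) n + a * m := by
  constructor
  · intro h
    unfold grep at h
    induction h using AddSubmonoid.closure_induction with
    | mem x hx =>
      obtain ⟨i, _, rfl⟩ := hx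
      exact ⟨1, _, TT_rep hB (i-1), by simp [aseq]⟩
    | zero => exact ⟨0, 0, TT_self hB 0, by simp⟩
    | add x y _ _ hx hy =>
      obtain ⟨k, m, h, rfl⟩ := hx
      obtain ⟨k', m', h', rfl⟩ := hy
      exact ⟨_, _, TT_add hB h h', by ring⟩
  · rintro ⟨k, m, h, rfl⟩
    have key : ∀ k N, PowSum B k N → ∃ m, N = B * m + k ∧
        k * repunit (B+1) n + a * m ∈ grep (B+1) a n := by
      intro k N hP
      induction hP with
      | zero => exact ⟨0, by simp, by simp⟩
      | add k N e _ ih =>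
        obtain ⟨m, rfl, hm⟩ := ih
        refine ⟨m + repunit (B+1) e, ?_, ?_⟩
        · rw [← repunit_geom]; ring
        · have hg : aseq (B+1) a n (e+1) ∈ grep (B+1) a n :=
            AddSubmonoid.subset_closure ⟨e+1, by omega, rfl⟩
          have := add_mem hm hg
          convert this using 1
          simp [aseq]; ring
    have hP : PowSum B k (B * m + k) := by
      have h0 := PowSum.of_dsum B hB (B*m+k)
      obtain ⟨j, hj⟩ := dsum_cong B hB (B*m+k)
      unfold TT at h
      set d := dsum B (B*m+k)
      -- j ≥ m
      have hjm : m ≤ j := by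
        by_contra hh
        have : B * j < B * m := Nat.mul_lt_mul_of_pos_left (by omega) hB
        omega
      obtain ⟨u, rfl⟩ := Nat.exists_eq_add_of_le hjm
      have hk : k = d + B * u := by nlinarith
      have := h0.splitMany hB u (by omega)
      rwa [← hk] at this
    obtain ⟨m', hm', hh⟩ := key _ _ hP
    have : m = m' := by
      apply Nat.eq_of_mul_eq_mul_left hB; omega
    rw [this]; exact hh

theorem TT_big {B : ℕ} (hB : 0 < B) {n k m : ℕ} (hm : m < repunit (B+1) n)
    (hk : (B+1)^n ≤ B * m + k) : TT B k m := by
  have g := repunit_geom B n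
  have h1 : B * (m+1) ≤ B * repunit (B+1) n := Nat.mul_le_mul_left B hm
  rw [mul_add] at h1
  obtain ⟨k0, hk0⟩ : ∃ k0, B * m + k0 = (B+1)^n := ⟨(B+1)^n - B * m, by omega⟩
  have : TT B k0 m := by
    unfold TT; rw [hk0, dsum_pow B hB]; omega
  exact TT_mono hB this (by omega)

theorem TT_red {B : ℕ} (hB : 0 < B) {n k m t : ℕ} (hn : 0 < n) (hm : m < repunit (B+1) n)
    (h : TT B k (m + t * repunit (B+1) n)) : TT B k m := by
  rcases Nat.lt_or_ge (B * m + k) ((B+1)^n) with hk | hk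
  · have g := repunit_geom B n
    rcases Nat.eq_zero_or_pos (B * m + k) with h0 | h0
    · unfold TT; rw [h0, dsum_zero]; omega
    have := dsum_fold B hB n (B*m+k) h0 hn hk (B * repunit (B+1) n) g.symm
      (B * (m + t * repunit (B+1) n) + k) t (by ring)
    unfold TT at *
    omega
  · exact TT_big hB hm hk

open Classical in
noncomputable def cc (B m : ℕ) : ℕ := if h : ∃ k, TT B k m then Nat.find h else 0

theorem cc_spec {B : ℕ} (hB : 0 < B) (m : ℕ) : TT B (cc B m) m := by
  classical
  have h : ∃ k, TT B k m := ⟨m, TT_self hB m⟩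
  unfold cc; rw [dif_pos h]; exact Nat.find_spec h

theorem cc_le {B k m : ℕ} (h' : TT B k m) : cc B m ≤ k := by
  classical
  have h : ∃ k, TT B k m := ⟨k, h'⟩
  unfold cc; rw [dif_pos h]; exact Nat.find_min' h h'

theorem cong_aux {R a m m' k k' : ℕ} (hR : Nat.gcd R a = 1) (hm : m < R)
    (h : k * R + a * m = k' * R + a * m') : ∃ t, m' = m + t * R ∧ k = k' + a * t := by
  have h1 : a * m ≡ a * m' [MOD R] := by
    have : (k * R + a * m) % R = (k' * R + a * m') % R := by rw [h]
    simpa [Nat.ModEq, Nat.add_mod] using this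
  have h2 : m ≡ m' [MOD R] := Nat.ModEq.cancel_left_of_coprime hR h1
  have h3 : m = m' % R := by rw [← h2]; exact (Nat.mod_eq_of_lt hm).symm
  refine ⟨m' / R, ?_, ?_⟩
  · rw [h3]; have := Nat.div_add_mod m' R; nlinarith
  · have h4 := Nat.div_add_mod m' R
    rw [← h3] at h4
    apply Nat.eq_of_mul_eq_mul_right (show 0 < R by omega)
    rw [← h4] at h
    nlinarith

theorem apery_iff {B : ℕ} (hB : 0 < B) {a n : ℕ} (hn : 0 < n)
    (hg : Nat.gcd (repunit (B+1) n) a = 1) (hR : 0 < repunit (B+1) n) (x : ℕ) :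
    x ∈ Apery (grep (B+1) a n) (repunit (B+1) n) ↔
      ∃ m, m < repunit (B+1) n ∧ x = cc B m * repunit (B+1) n + a * m := by
  set R := repunit (B+1) n with hRd
  constructor
  · rintro ⟨hx, hno⟩
    obtain ⟨k, m0, hT, rfl⟩ := (mem_iff hB a n x).mp hx
    have hml : m0 % R < R := Nat.mod_lt _ hR
    have hdm : m0 = m0 % R + (m0 / R) * R := by
      have := Nat.div_add_mod m0 R; nlinarith
    refine ⟨m0 % R, hml, ?_⟩
    set m := m0 % R
    set t := m0 / R
    rw [hdm] at hT
    have hT' := TT_red hB hn hml hT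
    have hle := cc_le hT'
    have hx2 : k * R + a * m0 = (k + a * t) * R + a * m := by rw [hdm]; ring
    rw [← hRd, hx2]
    rcases Nat.lt_or_ge (cc B m) (k + a * t) with hlt | hge
    · exfalso
      apply hno
      obtain ⟨u, hu⟩ : ∃ u, k + a * t = u + 1 := ⟨k + a * t - 1, by omega⟩
      refine ⟨u * R + a * m, (mem_iff hB a n _).mpr ⟨u, m, TT_mono hB (cc_spec hB m) (by omega), rfl⟩, ?_⟩
      rw [← hRd, hx2, hu]; ring
    · have : k + a * t = cc B m := by
        have : 0 ≤ a * t := Nat.zero_le _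
        omega
      rw [this]
  · rintro ⟨m, hm, rfl⟩
    refine ⟨(mem_iff hB a n _).mpr ⟨_, m, cc_spec hB m, rfl⟩, ?_⟩
    rintro ⟨t0, ht0, he⟩
    obtain ⟨k, m', hT, rfl⟩ := (mem_iff hB a n t0).mp ht0
    rw [← hRd] at he
    obtain ⟨t, rfl, hk⟩ := cong_aux (k := cc B m) (k' := k+1) (m' := m') hg hm (by rw [he]; ring)
    have := cc_le (TT_red hB hn hm hT)
    have : 0 ≤ a * t := Nat.zero_le _
    omega

/-- value of `c` at `R-1-d`. -/
theorem cc_M {B : ℕ} (hB : 0 < B) {n d M : ℕ} (hd : d + 2 ≤ n)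
    (hM : M + d + 1 = repunit (B+1) n) : cc B M = B * (d+1) + 1 := by
  have g := repunit_geom B n
  have e : B * M + B * (d+1) + 1 = (B+1)^n := by rw [← g, ← hM]; ring
  apply le_antisymm
  · apply cc_le
    unfold TT
    rw [← add_assoc, e, dsum_pow B hB]; omega
  · by_contra hlt
    have hT : TT B (B * (d+1)) M := TT_mono hB (cc_spec hB M) (by omega)
    unfold TT at hT
    have := dsum_compl B hB n (B * M + B * (d+1)) 0 (by omega)
    rw [dsum_zero] at this
    have h2 : B * (d+2) ≤ B * n := Nat.mul_le_mul_left B hd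
    nlinarith

set_option maxHeartbeats 1000000 in
theorem cover {B : ℕ} (hB : 0 < B) {n m : ℕ} (hn : 1 < n) (hm : m < repunit (B+1) n) (hRn : n ≤ repunit (B+1) n) :
    ∃ d M m' k', d + 2 ≤ n ∧ M + d + 1 = repunit (B+1) n ∧ M = m + m' ∧
      cc B M = cc B m + k' ∧ TT B k' m' := by
  set R := repunit (B+1) n with hR
  have g := repunit_geom B n
  rw [← hR] at g
  rcases Nat.eq_zero_or_pos m with rfl | hm0
  · refine ⟨0, R-1, R-1, cc B (R-1), by omega, by omega, by omega, ?_, cc_spec hB _⟩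
    have : cc B 0 ≤ 0 := cc_le (TT_self hB 0)
    omega
  have hk := cc_spec hB m
  have hmin : ∀ j, TT B j m → cc B m ≤ j := fun j => cc_le
  set k := cc B m with hkd
  have hBm : 0 < B * m := Nat.mul_pos hB hm0
  have h1 : B * (m+1) ≤ B * R := Nat.mul_le_mul_left B hm
  rw [mul_add] at h1
  have hk0 : 0 < k := by
    by_contra hh
    have hk00 : k = 0 := by omega
    rw [hk00] at hk
    unfold TT at hk
    have hP := PowSum.of_dsum B hB (B * m + 0)
    have h0 : dsum B (B*m+0) = 0 := by omega
    rw [h0] at hP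
    generalize hz : B * m + 0 = z at hP
    cases hP
    omega
  have hN : B * m + k ≤ (B+1)^n := by
    have := hmin ((B+1)^n - B * m) (TT_big hB hm (by omega))
    omega
  obtain ⟨j, hj⟩ : ∃ j, k = j + 1 := ⟨k-1, by omega⟩
  have hnj : ¬ TT B j m := fun h => by have := hmin j h; omega
  unfold TT at hnj
  obtain ⟨y, hy⟩ : ∃ y, B * m + j + y + 1 = (B+1)^n := ⟨(B+1)^n - (B*m+k), by omega⟩
  have hc := dsum_compl B hB n _ y hy
  obtain ⟨v, hv⟩ := dsum_cong B hB (B*m+j)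
  obtain ⟨w, hw⟩ := dsum_cong B hB y
  -- s(N-1) = j + B u
  have hvm : v < m := by
    by_contra hh
    have : B * m ≤ B * v := Nat.mul_le_mul_left B (by omega)
    omega
  obtain ⟨u, rfl⟩ := Nat.exists_eq_add_of_lt hvm
  have hs : dsum B (B * (v+u+1) + j) = j + B * (u+1) := by linarith
  have hun : u + 1 < n := by
    by_contra hh
    have h5 : n * B ≤ (u+1) * B := Nat.mul_le_mul_right B (by omega)
    have hj0 : j = 0 := by linarith
    have hy0 : dsum B y = 0 := by linarith
    have hP := PowSum.of_dsum B hB y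
    rw [hy0] at hP
    have : y = 0 := by cases hP; rfl
    subst this
    omega
  obtain ⟨d, hd⟩ : ∃ d, n = d + 1 + (u + 1) := ⟨n - (u+2), by omega⟩
  have hyd : dsum B y + k = B * (d+1) + 1 := by
    rw [hs, hd] at hc
    linarith
  have hRd : B * R = B * (v + u + 1 + w + d + 1) := by linarith
  have hRd' := Nat.eq_of_mul_eq_mul_left hB hRd
  refine ⟨d, v+u+1+w, w, dsum B y, by omega, by omega, rfl, ?_, ?_⟩
  · rw [cc_M hB (n := n) (d := d) (by omega) (by omega)]; omega
  · unfold TT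
    rw [add_comm, ← hw]

theorem alpha_eq (B a n i : ℕ) (hi : 1 ≤ i) (h : i ≤ n) :
    ∃ M, M + (n - i) + 1 = repunit (B+1) n ∧
    aseq (B+1) a n i + B * ∑ j ∈ Finset.Icc i n, aseq (B+1) a n j
      = (B * (n - i + 1) + 1) * repunit (B+1) n + a * M := by
  have key : ∀ d, repunit (B+1) (i-1) + B * ∑ j ∈ Finset.Icc i (i+d), repunit (B+1) (j-1) + d + 1
      = repunit (B+1) (i+d) := by
    have hs : ∀ k, repunit (B+1) (k+1) = repunit (B+1) k + (B * repunit (B+1) k + 1) := by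
      intro k
      rw [repunit_geom]
      simp [repunit, Finset.sum_range_succ]
    intro d
    induction d with
    | zero =>
      have := hs (i-1)
      rw [Nat.sub_add_cancel hi] at this
      simp; omega
    | succ d ih =>
      rw [← add_assoc i d 1, Finset.sum_Icc_succ_top (by omega), hs, mul_add]
      simp only [Nat.add_sub_cancel]
      omega
  obtain ⟨d, rfl⟩ := Nat.exists_eq_add_of_le h
  refine ⟨_, by simpa using key d, ?_⟩
  simp only [aseq, Finset.sum_add_distrib, ← Finset.mul_sum]
  simp
  have : i + d + 1 - i = d + 1 := by omega
  rw [this]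
  ring

/-- The maximal elements of `Ap(S_a(b,n), a_1)` with respect to the order `y ≼ x ↔ x - y ∈ S`
(i.e. `∃ s ∈ S, x = y + s`) are exactly the `α_i = a_i + (b−1)·∑_{j=i}^n a_j`
for `i = 2, …, n`. -/
theorem stmt_16 (b a n : ℕ) (hb : 1 < b) (hn : 1 < n) (ha : 0 < a)
    (hgcd : Nat.gcd (repunit b n) a = 1) :
    {ω | ω ∈ Apery (grep b a n) (repunit b n) ∧
        ∀ ω' ∈ Apery (grep b a n) (repunit b n),
          (∃ s ∈ grep b a n, ω' = ω + s) → ω' = ω}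
      = {x | ∃ i, 2 ≤ i ∧ i ≤ n ∧
          x = aseq b a n i + (b - 1) * ∑ j ∈ Finset.Icc i n, aseq b a n j} := by
  obtain ⟨B, rfl⟩ : ∃ B, b = B + 1 := ⟨b - 1, by omega⟩
  have hB : 0 < B := by omega
  have hRn : n ≤ repunit (B+1) n := by
    unfold repunit
    calc n = ∑ j ∈ Finset.range n, 1 := by simp
      _ ≤ _ := Finset.sum_le_sum (fun j _ => Nat.one_le_pow _ _ (by omega))
  have hA := apery_iff (a := a) hB (show 0 < n by omega) hgcd (by omega)
  have hdom : ∀ ω ∈ Apery (grep (B+1) a n) (repunit (B+1) n), ∃ d M s, d + 2 ≤ n ∧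
      M + d + 1 = repunit (B+1) n ∧ s ∈ grep (B+1) a n ∧
      (B * (d+1) + 1) * repunit (B+1) n + a * M = ω + s := by
    intro ω hω
    obtain ⟨m, hm, rfl⟩ := (hA ω).mp hω
    obtain ⟨d, M, m', k', hd, hM, hMm, hc, hT⟩ := cover hB hn hm hRn
    refine ⟨d, M, _, hd, hM, (mem_iff hB a n _).mpr ⟨k', m', hT, rfl⟩, ?_⟩
    rw [← cc_M hB hd hM, hc, hMm]; ring
  have hAM : ∀ d M, d + 2 ≤ n → M + d + 1 = repunit (B+1) n →
      (B * (d+1) + 1) * repunit (B+1) n + a * M ∈ Apery (grep (B+1) a n) (repunit (B+1) n) := by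
    intro d M hd hM
    exact (hA _).mpr ⟨M, by omega, by rw [cc_M hB hd hM]⟩
  ext ω
  simp only [Set.mem_setOf_eq, Nat.add_sub_cancel]
  constructor
  · rintro ⟨hω, hmax⟩
    obtain ⟨d, M, s, hd, hM, hs, he⟩ := hdom ω hω
    have := hmax _ (hAM d M hd hM) ⟨s, hs, he⟩
    refine ⟨n - d, by omega, by omega, ?_⟩
    obtain ⟨M', hM', h'⟩ := alpha_eq B a n (n-d) (by omega) (by omega)
    have e1 : n - (n - d) = d := by omega
    rw [e1] at hM' h'
    have : M' = M := by omega
    rw [h', this]; omega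
  · rintro ⟨i, hi, hin, rfl⟩
    obtain ⟨M, hM, h'⟩ := alpha_eq B a n i (by omega) hin
    rw [h']
    obtain ⟨d, hd⟩ : ∃ d, n - i = d := ⟨_, rfl⟩
    rw [hd] at hM ⊢
    refine ⟨hAM d M (by omega) hM, ?_⟩
    rintro ω' hω' ⟨s, hs, he⟩
    obtain ⟨d', M', s', hd', hM', hs', he'⟩ := hdom ω' hω'
    obtain ⟨k, m, hT, hkm⟩ := (mem_iff hB a n _).mp (add_mem hs hs')
    have hdM := cc_M hB (show d + 2 ≤ n by omega) hM
    have hdM' := cc_M hB hd' hM'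
    have heq : (B * (d'+1) + 1) * repunit (B+1) n + a * M' =
        (B * (d+1) + 1 + k) * repunit (B+1) n + a * (M + m) := by
      rw [he', he, add_assoc _ s s', hkm]; ring
    obtain ⟨t, ht1, ht2⟩ := cong_aux hgcd (show M' < _ by omega) heq
    have hT2 := TT_add hB (cc_spec hB M) hT
    rw [ht1] at hT2
    have hle := cc_le (TT_red hB (show 0 < n by omega) (show M' < _ by omega) hT2)
    rw [hdM, hdM'] at hle
    have hat : a * t = 0 := by omega
    have ht : t = 0 := by
      rcases Nat.mul_eq_zero.mp hat with h | h
      · omega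
      · exact h
    subst ht
    have hdd : d' ≤ d := by omega
    have hdd2 : d ≤ d' := by
      have : B * (d+1) ≤ B * (d'+1) := by omega
      have := Nat.le_of_mul_le_mul_left this hB
      omega
    have : d = d' := by omega
    subst this
    have : M' = M := by omega
    subst this
    omega
end

section
/- Let b > 1 and n > 1 be integers and a a positive integer with gcd(r_b(n), a) = 1. Then S_a(b,n) satisfies Wilf's conjecture: F(S_a(b,n)) ≤ n·n(S_a(b,n)) − 1, where n is the embedding dimension of S_a(b,n) and n(S_a(b,n)) denotes the number of elements s of S_a(b,n) with s < F(S_a(b,n)). -/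
theorem repunit_succ' (b l : ℕ) : repunit b (l+1) = b * repunit b l + 1 := by
  unfold repunit
  rw [Finset.sum_range_succ', Finset.mul_sum]
  simp [pow_succ, mul_comm]

theorem repunit_succ_top (b l : ℕ) : repunit b (l+1) = repunit b l + b ^ l := by
  unfold repunit
  rw [Finset.sum_range_succ]

theorem repunit_pow (c l : ℕ) : c * repunit (c+1) l + 1 = (c+1) ^ l := by
  induction l with
  | zero => simp [repunit]
  | succ l ih => rw [repunit_succ_top, pow_succ, mul_add]; nlinarith

/-- `R` is a sum of `k` repunits. -/
def PP (b k R : ℕ) : Prop := ∃ L : List ℕ, L.length = k ∧ (L.map (repunit b)).sum = R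

theorem PP.add {b k R k' R' : ℕ} (h : PP b k R) (h' : PP b k' R') : PP b (k+k') (R+R') := by
  obtain ⟨L, h1, h2⟩ := h
  obtain ⟨L', h1', h2'⟩ := h'
  exact ⟨L ++ L', by simp [h1, h1'], by simp [h2, h2']⟩

theorem PP.rep (b c l : ℕ) : PP b c (c * repunit b l) :=
  ⟨List.replicate c l, by simp, by simp⟩

theorem mem_grep (b a n x : ℕ) :
    x ∈ grep b a n ↔ ∃ k R, PP b k R ∧ x = k * repunit b n + a * R := by
  constructor
  · intro h
    unfold grep at h
    induction h using AddSubmonoid.closure_induction with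
    | mem x hx =>
      obtain ⟨i, hi, rfl⟩ := hx
      exact ⟨1, repunit b (i-1), by simpa using PP.rep b 1 (i-1), by simp [aseq]⟩
    | zero => exact ⟨0, 0, ⟨[], rfl, rfl⟩, by simp⟩
    | add x y _ _ hx hy =>
      obtain ⟨k, R, h, rfl⟩ := hx
      obtain ⟨k', R', h', rfl⟩ := hy
      exact ⟨k+k', R+R', h.add h', by ring⟩
  · rintro ⟨k, R, ⟨L, rfl, rfl⟩, rfl⟩
    induction L with
    | nil => simp
    | cons e L ih =>
      have h1 : repunit b n + a * repunit b e ∈ grep b a n :=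
        AddSubmonoid.subset_closure ⟨e+1, by omega, by simp [aseq]⟩
      have := add_mem h1 ih
      convert this using 1
      simp only [List.length_cons, List.map_cons, List.sum_cons]
      ring

theorem greedy (b : ℕ) (hb : 1 < b) (n : ℕ) : ∀ R, R < repunit b (n+2) →
    ∃ i l l' R', 1 ≤ i ∧ i ≤ n + 1 ∧ l + l' = (b-1)*i+1 ∧ PP b l R ∧ PP b l' R' ∧
      R + R' + i = repunit b (n+2) := by
  induction n with
  | zero =>
    intro R hR
    have e1 : repunit b 1 = 1 := by simp [repunit]
    have e2 : repunit b 2 = b + 1 := by rw [repunit_succ', e1]; simp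
    simp only [Nat.zero_add] at *
    rw [e2] at *
    refine ⟨1, R, b - R, b - R, le_rfl, le_rfl, by omega, ?_, ?_, by omega⟩
    · simpa [e1] using PP.rep b R 1
    · simpa [e1] using PP.rep b (b-R) 1
  | succ n ih =>
    intro R hR
    have hs := repunit_succ' b (n+2)
    have ht := repunit_succ_top b (n+2)
    rw [show n + 1 + 2 = n + 2 + 1 by ring] at *
    set r := repunit b (n+2) with hr
    have hrpos : 0 < r := by rw [hr, repunit_succ']; omega
    have hdm := Nat.div_add_mod R r
    have hlt := Nat.mod_lt R hrpos
    set c := R / r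
    set R₀ := R % r
    rcases lt_or_ge c b with hc | hc
    · obtain ⟨i, l, l', R', h1, h2, h3, h4, h5, h6⟩ := ih R₀ hlt
      refine ⟨i+1, l + c, l' + (b-1-c), R' + (b-1-c) * r, by omega, by omega,
        by rw [mul_add]; omega, ?_,
        h5.add (PP.rep b _ (n+2)), ?_⟩
      · have := h4.add (PP.rep b c (n+2))
        rw [← hr] at this
        convert this using 1
        linarith
      · obtain ⟨d, hd⟩ : ∃ d, b = c + d + 1 := ⟨b - c - 1, by omega⟩
        have hd' : b - 1 - c = d := by omega
        have hbr : b * r = (c + d + 1) * r := by rw [hd]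
        rw [hd', hs, hbr]
        nlinarith
    · have h1 : b * r ≤ c * r := Nat.mul_le_mul_right _ hc
      have h2 : R = b * r := by nlinarith
      refine ⟨1, b, 0, 0, le_rfl, by omega, by omega, ?_, ⟨[], rfl, rfl⟩, by omega⟩
      rw [h2]
      exact PP.rep b b (n+2)

theorem shift_sum (b n : ℕ) (hn : 0 < n) (e : ℕ) :
    ∑ s ∈ Finset.range n, b ^ ((e + s) % n) = repunit b n := by
  induction e with
  | zero =>
    unfold repunit
    refine Finset.sum_congr rfl fun s hs => ?_
    rw [Nat.zero_add, Nat.mod_eq_of_lt (Finset.mem_range.1 hs)]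
  | succ e ih =>
    rw [← ih]
    have h1 := Finset.sum_range_succ (fun s => b ^ ((e + s) % n)) n
    have h2 := Finset.sum_range_succ' (fun s => b ^ ((e + s) % n)) n
    rw [h1] at h2
    simp only [Nat.add_mod_right, Nat.add_zero] at h2
    have h3 : ∀ s, e + 1 + s = e + (s+1) := fun s => by ring
    simp only [h3]
    omega

theorem list_swap (b n : ℕ) (hn : 0 < n) (L : List ℕ) :
    ∑ s ∈ Finset.range n, (L.map (fun e => b ^ ((e + s) % n))).sum
      = L.length * repunit b n := by
  induction L with
  | nil => simp
  | cons e L ih =>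
    simp only [List.map_cons, List.sum_cons, List.length_cons, Finset.sum_add_distrib]
    rw [shift_sum b n hn, ih]; ring

theorem list_modeq (b n M s : ℕ) (hM : b ^ n ≡ 1 [MOD M]) (L : List ℕ) :
    (L.map (fun e => b ^ ((e + s) % n))).sum ≡ b ^ s * (L.map (fun e => b ^ e)).sum [MOD M] := by
  induction L with
  | nil => simp; rfl
  | cons e L ih =>
    simp only [List.map_cons, List.sum_cons, mul_add]
    refine Nat.ModEq.add ?_ ih
    rw [← pow_add]
    conv_rhs => rw [add_comm s e, ← Nat.mod_add_div (e+s) n, pow_add, pow_mul]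
    have := (hM.pow ((e+s)/n)).mul_left (b ^ ((e+s)%n))
    simpa using this.symm

theorem digit_bound (c n T : ℕ) (hn : 0 < n) (hc : 0 < c) (hT : 0 < T) (L : List ℕ)
    (hL : (L.map (fun e => (c+1) ^ e)).sum = c * repunit (c+1) n * T) : n * c ≤ L.length := by
  have hp := repunit_pow c n
  set m := repunit (c+1) n with hm
  have hmpos : 0 < m := by
    obtain ⟨k, rfl⟩ : ∃ k, n = k + 1 := ⟨n - 1, by omega⟩
    rw [hm, repunit_succ']; omega
  have hM : (c+1) ^ n ≡ 1 [MOD (c*m)] := by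
    rw [← hp]; simp [Nat.ModEq]
  have hne : L ≠ [] := by
    rintro rfl
    simp at hL
    omega
  have key : ∀ s ∈ Finset.range n, c * m ≤ (L.map (fun e => (c+1) ^ ((e + s) % n))).sum := by
    intro s _
    apply Nat.le_of_dvd
    · cases L with
      | nil => exact absurd rfl hne
      | cons e L =>
        simp only [List.map_cons, List.sum_cons]
        positivity
    · rw [(list_modeq (c+1) n (c*m) s hM L).dvd_iff dvd_rfl, hL]
      exact Dvd.dvd.mul_left (Dvd.intro _ rfl) _
  have h := Finset.sum_le_sum key
  rw [list_swap _ _ hn] at h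
  simp only [Finset.sum_const, Finset.card_range, smul_eq_mul] at h
  rw [← mul_assoc] at h
  exact Nat.le_of_mul_le_mul_right h hmpos

theorem list_pow (c : ℕ) (L : List ℕ) :
    (L.map (fun e => (c+1) ^ e)).sum = c * (L.map (repunit (c+1))).sum + L.length := by
  induction L with
  | nil => simp
  | cons e L ih =>
    simp only [List.map_cons, List.sum_cons, List.length_cons]
    rw [ih, ← repunit_pow]
    ring

theorem le_repunit (b n : ℕ) (hb : 1 < b) : n ≤ repunit b n := by
  induction n with
  | zero => simp
  | succ n ih => rw [repunit_succ']; nlinarith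

theorem f_not_mem (b a n i : ℕ) (hb : 1 < b) (ha : 0 < a)
    (hgcd : Nat.gcd (repunit b n) a = 1) (hi : 1 ≤ i) (hin : i < n) (f : ℕ)
    (hf : f + a * i = a * repunit b n + (b-1) * i * repunit b n) : f ∉ grep b a n := by
  intro hmem
  obtain ⟨k, R, ⟨L, hk, hR⟩, rfl⟩ := (mem_grep b a n f).1 hmem
  obtain ⟨c, rfl⟩ : ∃ c, b = c + 1 := ⟨b - 1, by omega⟩
  simp only [Nat.add_sub_cancel] at hf
  have hle := le_repunit (c+1) n hb
  have hlp := list_pow c L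
  rw [hR, hk] at hlp
  set m := repunit (c+1) n with hm
  have hd : m ∣ R + i := by
    have h1 : m ∣ k * m + a * (R + i) := ⟨a + c * i, by linarith⟩
    exact Nat.Coprime.dvd_of_dvd_mul_left hgcd ((Nat.dvd_add_right (Dvd.intro_left _ rfl)).1 h1)
  obtain ⟨T, hT⟩ := hd
  have hTpos : 0 < T := by
    rcases Nat.eq_zero_or_pos T with h | h
    · subst h; omega
    · exact h
  have hmp : 0 < m := by omega
  have hk2 : k + a * T = a + c * i := by
    have : m * (k + a * T) = m * (a + c * i) := by
      have : a * (R + i) = a * (m * T) := by rw [hT]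
      nlinarith
    exact Nat.eq_of_mul_eq_mul_left hmp this
  have hk3 : k ≤ c * i := by nlinarith
  obtain ⟨d, hd⟩ := Nat.exists_eq_add_of_le hk3
  have := digit_bound c n T (by omega) (by omega) hTpos (L ++ List.replicate d 0) (by
    simp only [List.map_append, List.sum_append, List.map_replicate, List.sum_replicate, pow_zero,
      smul_eq_mul, mul_one]
    rw [hlp, ← hm, mul_assoc, ← hT, mul_add, hd]; ring)
  simp only [List.length_append, List.length_replicate, hk, ← hd] at this
  nlinarith

theorem gap_dom (b a n x : ℕ) (hb : 1 < b) (hn : 1 < n)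
    (hgcd : Nat.gcd (repunit b n) a = 1) (hx : x ∉ grep b a n) :
    ∃ i s, 1 ≤ i ∧ i < n ∧ s ∈ grep b a n ∧
      x + s + a * i = a * repunit b n + (b-1) * i * repunit b n := by
  obtain ⟨n, rfl⟩ : ∃ k, n = k + 2 := ⟨n - 2, by omega⟩
  have hle := le_repunit b (n+2) hb
  have hg := greedy b hb n
  set m := repunit b (n+2) with hm
  have : NeZero m := ⟨by omega⟩
  obtain ⟨R, hR, hRx⟩ : ∃ R, R < m ∧ a * R ≡ x [MOD m] := by
    have hu : IsUnit (a : ZMod m) := (ZMod.isUnit_iff_coprime a m).2 (Nat.Coprime.symm hgcd)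
    obtain ⟨y, hy⟩ := hu.exists_right_inv
    refine ⟨(y * x : ZMod m).val, ZMod.val_lt _, ?_⟩
    rw [← ZMod.natCast_eq_natCast_iff]
    push_cast
    rw [ZMod.natCast_zmod_val, ← mul_assoc, hy, one_mul]
  obtain ⟨i, l, l', R', h1, h2, h3, h4, h5, h6⟩ := hg R hR
  obtain ⟨k, hk⟩ := (Nat.modEq_iff_dvd.1 hRx)
  push_cast at hk
  have hkl : k < l := by
    by_contra hcon
    push Not at hcon
    apply hx
    obtain ⟨q, rfl⟩ : ∃ q : ℕ, k = l + q := ⟨(k - l).toNat, by omega⟩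
    rw [mem_grep]
    refine ⟨l + q, R, by simpa [repunit] using h4.add (PP.rep b q 0), ?_⟩
    rw [← hm]
    zify
    linarith
  obtain ⟨q, hq⟩ : ∃ q : ℕ, (l : ℤ) = k + 1 + q := ⟨(l - k - 1).toNat, by omega⟩
  refine ⟨i, (l' + q) * m + a * R', h1, by omega, ?_, ?_⟩
  · rw [mem_grep]
    exact ⟨l' + q, R', by simpa [repunit] using h5.add (PP.rep b q 0), rfl⟩
  · have h3' : ((l : ℤ) + l') = ((b - 1 : ℕ) : ℤ) * i + 1 := by exact_mod_cast h3
    have h6' : (R : ℤ) + R' + i = m := by exact_mod_cast h6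
    zify
    have e1 : ((b - 1 : ℕ) : ℤ) * i = k + q + l' := by linarith
    rw [e1]
    linear_combination hk + a * h6'

/-- `S_a(b,n)` satisfies Wilf's conjecture: `F(S) ≤ e(S)·n(S) − 1`, where `F` is the
Frobenius number (the greatest integer not in `S`), the embedding dimension `e(S)`
equals `n`, and `n(S)` is the number of elements of `S` smaller than `F`. -/
theorem stmt_18 (b a n : ℕ) (hb : 1 < b) (hn : 1 < n) (ha : 0 < a)
    (hgcd : Nat.gcd (repunit b n) a = 1) :
    ∀ F : ℤ, IsGreatest {x : ℤ | ∀ s ∈ grep b a n, (s : ℤ) ≠ x} F →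
      F ≤ (n : ℤ) * Nat.card {s : ℕ | s ∈ grep b a n ∧ (s : ℤ) < F} - 1 := by
  intro F hF
  obtain ⟨hF1, hF2⟩ := hF
  have hle := le_repunit b n hb
  have hbd : ∀ f : ℕ, f ∉ grep b a n → (f : ℤ) ≤ F := fun f hf =>
    hF2 (fun s hs h => hf (by have : s = f := by exact_mod_cast h
                              exact this ▸ hs))
  have hfle : ∀ i, i < n → a * i ≤ a * repunit b n + (b-1) * i * repunit b n := fun i hi =>
    le_trans (Nat.mul_le_mul_left a (by omega)) (Nat.le_add_right _ _)
  let f : ℕ → ℕ := fun i => a * repunit b n + (b-1) * i * repunit b n - a * i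
  have hfb : ∀ i, 1 ≤ i → i < n → (f i : ℤ) ≤ F := fun i h1 h2 =>
    hbd _ (f_not_mem b a n i hb ha hgcd h1 h2 _ (Nat.sub_add_cancel (hfle i h2)))
  have hF0 : 0 ≤ F := le_trans (by positivity) (hfb 1 le_rfl hn)
  lift F to ℕ using hF0
  classical
  let A : Finset ℕ := (Finset.range F).filter (· ∈ grep b a n)
  have hA : Nat.card {s : ℕ | s ∈ grep b a n ∧ (s : ℤ) < F} = A.card := by
    have : {s : ℕ | s ∈ grep b a n ∧ (s : ℤ) < F} = (A : Set ℕ) := by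
      ext s; simp [A, and_comm]
    rw [this]; simp
  rw [hA]
  have hFn : F ∉ grep b a n := fun h => hF1 F h rfl
  have hsub : Finset.range (F+1) ⊆
      A ∪ (Finset.Icc 1 (n-1)).biUnion (fun i => A.image (fun s => f i - s)) := by
    intro x hx
    rw [Finset.mem_range] at hx
    rw [Finset.mem_union]
    by_cases hxm : x ∈ grep b a n
    · left
      have : x ≠ F := fun h => hFn (h ▸ hxm)
      simp only [A, Finset.mem_filter, Finset.mem_range]
      exact ⟨by omega, hxm⟩
    · right
      obtain ⟨i, s, h1, h2, h3, h4⟩ := gap_dom b a n x hb hn hgcd hxm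
      have hfi : f i = x + s := by simp only [f]; omega
      have hb2 := hfb i h1 h2
      have : s ≠ F := fun h => hFn (h ▸ h3)
      simp only [Finset.mem_biUnion, Finset.mem_Icc, Finset.mem_image, A, Finset.mem_filter,
        Finset.mem_range]
      exact ⟨i, ⟨h1, by omega⟩, s, ⟨by omega, h3⟩, by omega⟩
  have hc := Finset.card_le_card hsub
  have hu := Finset.card_union_le A
    ((Finset.Icc 1 (n-1)).biUnion (fun i => A.image (fun s => f i - s)))
  have hbi := Finset.card_biUnion_le_card_mul (Finset.Icc 1 (n-1))
    (fun i => A.image (fun s => f i - s)) A.card (fun i _ => Finset.card_image_le)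
  rw [Finset.card_range] at hc
  rw [Nat.card_Icc] at hbi
  obtain ⟨k, rfl⟩ : ∃ k, n = k + 1 := ⟨n - 1, by omega⟩
  simp only [Nat.add_sub_cancel] at hbi hu hc
  have : F + 1 ≤ (k+1) * A.card := by nlinarith
  have : (F : ℤ) + 1 ≤ ((k + 1 : ℕ) : ℤ) * A.card := by exact_mod_cast this
  linarith
end
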